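/- Let T_D be shifted exponential with rate λ_d > 0, shift c ≥ 0, independent of T_N(K) (K-th order statistic of N i.i.d. shifted exponentials with rate λ_s, shift c). Conditioning on the event {T_N(K) ≤ T_D}, the conditional density of T_N(K) at t > c is proportional to Σ_{j=0}^{K-1} B_{K,j}·λ_s·e^{-H_{K,j}(t-c)} (normalized by R_K = P(T_N(K) ≤ T_D)), and the conditional first moment is E[T_N(K) | T_N(K) ≤ T_D] = (1/R_K)·Σ_{j=0}^{K-1} B_{K,j}·λ_s·(c·H_{K,j} + 1)/H_{K,j}², where B_{K,j} = K·binom(N,K)·binom(K-1,j)·(-1)^j and H_{K,j} = λ_s(N-K+1+j) + λ_d. -/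

import Mathlib

open MeasureTheory ProbabilityTheory Real

/-- The shifted exponential distribution with rate `l` and shift `c`:
density `l * exp (-l*(t-c))` for `t > c`, `0` otherwise. -/
noncomputable def shiftedExp (l c : ℝ) : MeasureTheory.Measure ℝ :=
  MeasureTheory.volume.withDensity
    (fun t => ENNReal.ofReal (if c < t then l * Real.exp (-l * (t - c)) else 0))

/-- The `K`-th order statistic (K-th smallest value) of the family `T` evaluated at `ω`. -/
noncomputable def orderStat {Ω : Type*} {N : ℕ} (T : Fin N → Ω → ℝ) (K : ℕ) (ω : Ω) : ℝ :=
  sInf {x : ℝ | K ≤ Nat.card {i : Fin N // T i ω ≤ x}}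

/-!
The `K`-th order statistic is at most `x` iff at least `K` of the variables are, so for independent
variables with distribution function `F` its distribution function is a binomial tail at `F x`. In
the success probability `p`, the derivative of that tail is a telescoping sum of Bernstein
polynomials, which collapses to the single term `N * C(N-1, K-1) * p ^ (K-1) * (1-p) ^ (N-K)`.

Restricting an independent pair `(D, Y)` to `{Y ≤ D}` multiplies the density of `Y` by the survival
function of `D`, here `exp (-ld * (t - c))`. Expanding `(1 - exp (-ls * (t - c))) ^ (K - 1)` by the
binomial theorem makes the restricted density a signed mixture of exponentials, integrated term by
term, and conditioning only divides by the probability of the event.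
-/

section

open Set

open scoped Polynomial

theorem le_card_subtype_iff {ι : Type*} [Finite ι] {p : ι → Prop} {k : ℕ} :
    k ≤ Nat.card {i // p i} ↔ ∃ s : Finset ι, s.card = k ∧ ∀ i ∈ s, p i := by
  classical
  have := Fintype.ofFinite ι
  rw [Nat.card_eq_fintype_card, Fintype.card_subtype, Finset.le_card_iff_exists_subset_card]
  simp only [Finset.subset_iff, Finset.mem_filter_univ, and_comm]

theorem isClosed_setOf_le_card_le {ι α : Type*} [Finite ι] [TopologicalSpace α] [Preorder α]
    [ClosedIciTopology α] (a : ι → α) (k : ℕ) : IsClosed {x | k ≤ Nat.card {i // a i ≤ x}} := by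
  have : {x | k ≤ Nat.card {i // a i ≤ x}}
      = ⋃ s ∈ {s : Finset ι | s.card = k}, ⋂ i ∈ s, Ici (a i) := by
    ext x
    simp [le_card_subtype_iff]
  rw [this]
  exact (toFinite _).isClosed_biUnion fun s _ => isClosed_biInter fun i _ => isClosed_Ici

theorem orderStat_le_iff {Ω : Type*} {N K : ℕ} (hK : 1 ≤ K) (hKN : K ≤ N) (T : Fin N → Ω → ℝ)
    (ω : Ω) (x : ℝ) : orderStat T K ω ≤ x ↔ K ≤ Nat.card {i // T i ω ≤ x} := by
  have bddBelow : BddBelow {y | K ≤ Nat.card {i // T i ω ≤ y}} := by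
    obtain ⟨m, hm⟩ := (finite_range fun i => T i ω).bddBelow
    refine ⟨m, fun y hy => ?_⟩
    obtain ⟨i, hi⟩ := (Nat.card_pos_iff.1 (hK.trans hy)).1
    exact (hm ⟨i, rfl⟩).trans hi
  have nonempty : {y | K ≤ Nat.card {i // T i ω ≤ y}}.Nonempty := by
    obtain ⟨m, hm⟩ := (finite_range fun i => T i ω).bddAbove
    have : ∀ i, T i ω ≤ m := fun i => hm ⟨i, rfl⟩
    exact ⟨m, by simpa [this] using hKN⟩
  have attained : K ≤ Nat.card {i // T i ω ≤ orderStat T K ω} :=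
    (isClosed_setOf_le_card_le (T · ω) K).csInf_mem nonempty bddBelow
  refine ⟨fun h => attained.trans ?_, fun h => csInf_le bddBelow h⟩
  exact Nat.card_mono (toFinite {i | T i ω ≤ x}) fun i hi => le_trans hi h

theorem measurable_orderStat {Ω : Type*} [MeasurableSpace Ω] {N K : ℕ} (hK : 1 ≤ K) (hKN : K ≤ N)
    {T : Fin N → Ω → ℝ} (hT : ∀ i, Measurable (T i)) : Measurable (orderStat T K) := by
  refine measurable_of_Iic fun x => ?_
  have : orderStat T K ⁻¹' Iic x
      = ⋃ s ∈ {s : Finset (Fin N) | s.card = K}, ⋂ i ∈ s, T i ⁻¹' Iic x := by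
    ext ω
    simp only [mem_preimage, mem_Iic, orderStat_le_iff hK hKN, le_card_subtype_iff, mem_iUnion,
      mem_iInter, mem_ofPred_eq, exists_prop]
  rw [this]
  exact (toFinite _).measurableSet_biUnion fun s _ =>
    s.measurableSet_biInter fun i _ => hT i measurableSet_Iic

/-- The probability of at least `k` successes in `n` independent trials, as a polynomial in the
success probability. -/
noncomputable def binomialTail (R : Type*) [CommRing R] (n k : ℕ) : R[X] :=
  ∑ m ∈ Finset.Ico k (n + 1), bernsteinPolynomial R n m

theorem derivative_binomialTail_succ (R : Type*) [CommRing R] (n k : ℕ) :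
    (binomialTail R n (k + 1)).derivative = n * bernsteinPolynomial R (n - 1) k := by
  rcases lt_or_ge n (k + 1) with hnk | hkn
  · rcases n.eq_zero_or_pos with rfl | hn
    · simp [binomialTail]
    · rw [bernsteinPolynomial.eq_zero_of_lt R (by omega), binomialTail,
        Finset.Ico_eq_empty (by omega)]
      simp
  · have last : bernsteinPolynomial R (n - 1) n = 0 :=
      bernsteinPolynomial.eq_zero_of_lt R (by omega)
    rw [binomialTail, ← Finset.sum_Ico_add' _ k n 1, Polynomial.derivative_sum]
    simp only [bernsteinPolynomial.derivative_succ]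
    rw [← Finset.mul_sum, ← neg_inj, ← mul_neg, ← Finset.sum_neg_distrib]
    simp only [neg_sub]
    rw [Finset.sum_Ico_sub _ (by omega), last]
    simp

theorem eval_binomialTail {R : Type*} [CommRing R] (n k : ℕ) (p : R) :
    (binomialTail R n k).eval p
      = ∑ m ∈ Finset.Ico k (n + 1), n.choose m * (p ^ m * (1 - p) ^ (n - m)) := by
  simp [binomialTail, bernsteinPolynomial, Polynomial.eval_finsetSum, mul_assoc]

theorem pi_real_setOf_mem_iff {ι α : Type*} [Fintype ι] [MeasurableSpace α] (μ : Measure α)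
    [IsProbabilityMeasure μ] {A : Set α} (hA : MeasurableSet A) (s : Finset ι) :
    (Measure.pi fun _ : ι => μ).real {f | ∀ i, f i ∈ A ↔ i ∈ s}
      = μ.real A ^ s.card * (1 - μ.real A) ^ (Fintype.card ι - s.card) := by
  classical
  have rect : {f : ι → α | ∀ i, f i ∈ A ↔ i ∈ s} = univ.pi fun i => if i ∈ s then A else Aᶜ := by
    ext f
    refine forall_congr' fun i => ?_
    by_cases hi : i ∈ s <;> simp [hi]
  rw [rect, measureReal_def, Measure.pi_pi, ENNReal.toReal_prod, ← probReal_compl_eq_one_sub hA]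
  simp_rw [apply_ite μ, apply_ite ENNReal.toReal, ← measureReal_def]
  rw [Finset.prod_ite]
  simp [Finset.filter_not, Finset.card_sdiff]

theorem pi_real_le_card_mem {ι α : Type*} [Fintype ι] [MeasurableSpace α] (μ : Measure α)
    [IsProbabilityMeasure μ] {A : Set α} (hA : MeasurableSet A) (k : ℕ) :
    (Measure.pi fun _ : ι => μ).real {f | k ≤ Nat.card {i // f i ∈ A}}
      = (binomialTail ℝ (Fintype.card ι) k).eval (μ.real A) := by
  classical
  let hits (f : ι → α) : Finset ι := Finset.univ.filter fun i => f i ∈ A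
  have fiber (s : Finset ι) : hits ⁻¹' {s} = {f | ∀ i, f i ∈ A ↔ i ∈ s} := by
    ext f
    simp [hits, Finset.ext_iff]
  have hfiber (s : Finset ι) : MeasurableSet (hits ⁻¹' {s}) := by
    rw [fiber]
    exact measurableSet_setOfPred.2 (.forall fun i =>
      (measurableSet_setOfPred.1 (measurable_pi_apply i hA)).iff measurable_const)
  have event : {f : ι → α | k ≤ Nat.card {i // f i ∈ A}}
      = hits ⁻¹' (Finset.univ.filter fun s : Finset ι => k ≤ s.card) := by
    ext f
    simp [hits, Nat.card_eq_fintype_card, Fintype.card_subtype]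
  calc (Measure.pi fun _ : ι => μ).real {f | k ≤ Nat.card {i // f i ∈ A}}
      = ∑ s ∈ Finset.univ.filter fun s : Finset ι => k ≤ s.card,
          μ.real A ^ s.card * (1 - μ.real A) ^ (Fintype.card ι - s.card) := by
        rw [event, ← sum_measureReal_preimage_singleton _ fun s _ => hfiber s]
        simp_rw [fiber, pi_real_setOf_mem_iff μ hA]
    _ = ∑ m ∈ Finset.range (Fintype.card ι + 1), (Fintype.card ι).choose m •
          if k ≤ m then μ.real A ^ m * (1 - μ.real A) ^ (Fintype.card ι - m) else 0 := by
        rw [Finset.sum_filter, ← Finset.powerset_univ, Finset.sum_powerset_apply_card fun m =>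
          if k ≤ m then μ.real A ^ m * (1 - μ.real A) ^ (Fintype.card ι - m) else 0,
          Finset.card_univ]
    _ = (binomialTail ℝ (Fintype.card ι) k).eval (μ.real A) := by
        simp only [eval_binomialTail, smul_ite, smul_zero, nsmul_eq_mul]
        rw [← Finset.sum_filter]
        congr 1
        ext m
        simp only [Finset.mem_filter, Finset.mem_range, Finset.mem_Ico]
        omega

theorem cdf_map_orderStat_pi {N K : ℕ} (hK : 1 ≤ K) (hKN : K ≤ N) (μ : Measure ℝ)
    [IsProbabilityMeasure μ] (x : ℝ) :
    cdf ((Measure.pi fun _ : Fin N => μ).map (orderStat Function.eval K)) x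
      = (binomialTail ℝ N K).eval (cdf μ x) := by
  have hmeas := measurable_orderStat hK hKN (T := Function.eval) measurable_pi_apply
  have := Measure.isProbabilityMeasure_map (μ := Measure.pi fun _ : Fin N => μ) hmeas.aemeasurable
  have event : orderStat Function.eval K ⁻¹' Iic x
      = {f : Fin N → ℝ | K ≤ Nat.card {i // f i ∈ Iic x}} := by
    ext f
    exact orderStat_le_iff hK hKN Function.eval f x
  rw [cdf_eq_real, cdf_eq_real, map_measureReal_apply hmeas measurableSet_Iic, event,
    pi_real_le_card_mem μ measurableSet_Iic, Fintype.card_fin]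

theorem eq_withDensity_of_hasDerivAt_cdf {μ : Measure ℝ} [IsProbabilityMeasure μ] {c : ℝ}
    {f : ℝ → ℝ} (hc : cdf μ c = 0) (hf : ∀ t, c < t → HasDerivAt (cdf μ) (f t) t) :
    μ = volume.withDensity fun t => ENNReal.ofReal (if c < t then f t else 0) := by
  have hf0 : ∀ t, c < t → 0 ≤ f t := fun t ht => (hf t ht).nonneg_of_monotone (monotone_cdf μ)
  refine Measure.ext_of_Iic _ _ fun x => ?_
  rw [withDensity_apply _ measurableSet_Iic, ← ofReal_cdf]
  have indic : (fun t => ENNReal.ofReal (if c < t then f t else 0))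
      = (Ioi c).indicator fun t => ENNReal.ofReal (f t) := by
    ext t
    by_cases ht : c < t <;> simp [ht]
  rw [indic, setLIntegral_indicator measurableSet_Ioi, Ioi_inter_Iic]
  rcases le_total x c with hx | hx
  · have : cdf μ x = 0 := le_antisymm (hc ▸ monotone_cdf μ hx) (cdf_nonneg μ x)
    simp [this, hx]
  · have hcont : ContinuousOn (cdf μ) (Icc c x) := fun t ht => by
      rcases ht.1.eq_or_lt with rfl | hct
      · exact ((cdf μ).right_continuous c).mono Icc_subset_Ici_self
      · exact (hf t hct).continuousAt.continuousWithinAt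
    have hint : IntegrableOn f (Ioc c x) := intervalIntegral.integrableOn_deriv_of_nonneg hcont
      (fun t ht => hf t ht.1) fun t ht => hf0 t ht.1
    rw [← ofReal_integral_eq_lintegral_ofReal hint
        (ae_restrict_of_forall_mem measurableSet_Ioc fun t ht => hf0 t ht.1),
      ← intervalIntegral.integral_of_le hx, intervalIntegral.integral_eq_sub_of_hasDerivAt_of_le hx
        hcont (fun t ht => hf t ht.1) ((intervalIntegrable_iff_integrableOn_Ioc_of_le hx).2 hint),
      hc, sub_zero]

theorem map_orderStat_pi_eq_withDensity {N K : ℕ} (hK : 1 ≤ K) (hKN : K ≤ N) {μ : Measure ℝ}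
    [IsProbabilityMeasure μ] {c : ℝ} {f : ℝ → ℝ} (hc : cdf μ c = 0)
    (hf : ∀ t, c < t → HasDerivAt (cdf μ) (f t) t) :
    (Measure.pi fun _ : Fin N => μ).map (orderStat Function.eval K)
      = volume.withDensity fun t => ENNReal.ofReal (if c < t then
          N * (bernsteinPolynomial ℝ (N - 1) (K - 1)).eval (cdf μ t) * f t else 0) := by
  have hmeas := measurable_orderStat hK hKN (T := Function.eval) measurable_pi_apply
  have := Measure.isProbabilityMeasure_map (μ := Measure.pi fun _ : Fin N => μ) hmeas.aemeasurable
  have hcdf := cdf_map_orderStat_pi hK hKN μ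
  refine eq_withDensity_of_hasDerivAt_cdf ?_ fun t ht => ?_
  · rw [hcdf, hc, eval_binomialTail]
    refine Finset.sum_eq_zero fun m hm => ?_
    have : m ≠ 0 := by have := (Finset.mem_Ico.1 hm).1; omega
    simp [this]
  · obtain ⟨k, rfl⟩ := Nat.exists_eq_add_of_le' hK
    have h := ((binomialTail ℝ N (k + 1)).hasDerivAt (cdf μ t)).comp t (hf t ht)
    rw [derivative_binomialTail_succ] at h
    simpa [funext hcdf, Function.comp_def] using h

theorem shiftedExp_eq_map_expMeasure (l c : ℝ) : shiftedExp l c = (expMeasure l).map (· + c) := by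
  have hdens : (fun t => ENNReal.ofReal (if c < t + c then l * exp (-l * (t + c - c)) else 0))
      =ᵐ[volume] exponentialPDF l := by
    filter_upwards [volume.ae_ne 0] with t ht
    simp only [lt_add_iff_pos_left, add_sub_cancel_right, neg_mul, exponentialPDF_eq,
      ht.symm.le_iff_lt]
  ext s hs
  have hpre : MeasurableSet ((· + c) ⁻¹' s) := measurable_add_const c hs
  calc shiftedExp l c s
      = ∫⁻ t in (· + c) ⁻¹' s,
          ENNReal.ofReal (if c < t + c then l * exp (-l * (t + c - c)) else 0) := by
        rw [shiftedExp, withDensity_apply _ hs, ← (measurePreserving_add_right volume c)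
          |>.setLIntegral_comp_preimage_emb (measurableEmbedding_addRight c)]
    _ = ∫⁻ t in (· + c) ⁻¹' s, exponentialPDF l t := lintegral_congr_ae (ae_restrict_of_ae hdens)
    _ = (expMeasure l).map (· + c) s := by
        rw [Measure.map_apply (measurable_add_const c) hs]
        exact (withDensity_apply _ hpre).symm

theorem isProbabilityMeasure_shiftedExp {l : ℝ} (hl : 0 < l) (c : ℝ) :
    IsProbabilityMeasure (shiftedExp l c) := by
  have := isProbabilityMeasure_expMeasure hl
  rw [shiftedExp_eq_map_expMeasure]
  exact Measure.isProbabilityMeasure_map (by fun_prop)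

theorem cdf_shiftedExp {l : ℝ} (hl : 0 < l) (c x : ℝ) :
    cdf (shiftedExp l c) x = if c ≤ x then 1 - exp (-l * (x - c)) else 0 := by
  have := isProbabilityMeasure_expMeasure hl
  have := isProbabilityMeasure_shiftedExp hl c
  have pre : (· + c) ⁻¹' Iic x = Iic (x - c) := by ext; simp [le_sub_iff_add_le]
  rw [cdf_eq_real, shiftedExp_eq_map_expMeasure, map_measureReal_apply (by fun_prop)
    measurableSet_Iic, pre, ← cdf_eq_real, cdf_expMeasure_eq hl]
  simp [neg_mul]

theorem hasDerivAt_cdf_shiftedExp {l c t : ℝ} (hl : 0 < l) (ht : c < t) :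
    HasDerivAt (cdf (shiftedExp l c)) (l * exp (-l * (t - c))) t := by
  have hexp : HasDerivAt (fun t => 1 - exp (-l * (t - c))) (l * exp (-l * (t - c))) t :=
    ((((hasDerivAt_id t).sub_const c).const_mul (-l)).exp.const_sub 1).congr_deriv <| by
      rw [id_eq]
      ring
  refine hexp.congr_of_eventuallyEq ?_
  filter_upwards [Ioi_mem_nhds ht] with x hx
  rw [cdf_shiftedExp hl, if_pos (le_of_lt hx)]

theorem shiftedExp_Ici {l c y : ℝ} (hl : 0 < l) (hy : c ≤ y) :
    shiftedExp l c (Ici y) = ENNReal.ofReal (exp (-l * (y - c))) := by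
  have := isProbabilityMeasure_shiftedExp hl c
  have : Ioi y =ᵐ[shiftedExp l c] Ici y :=
    (withDensity_absolutelyContinuous _ _).ae_eq Ioi_ae_eq_Ici
  rw [← measure_congr this, ← compl_Iic, ← ofReal_measureReal, probReal_compl_eq_one_sub
    measurableSet_Iic, ← cdf_eq_real, cdf_shiftedExp hl, if_pos hy, sub_sub_cancel]

theorem map_orderStat_pi_shiftedExp {N K : ℕ} (hK : 1 ≤ K) (hKN : K ≤ N) {l : ℝ} (hl : 0 < l)
    (c : ℝ) :
    (Measure.pi fun _ : Fin N => shiftedExp l c).map (orderStat Function.eval K)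
      = volume.withDensity fun t => ENNReal.ofReal (if c < t then
          N * (bernsteinPolynomial ℝ (N - 1) (K - 1)).eval (1 - exp (-l * (t - c)))
            * (l * exp (-l * (t - c))) else 0) := by
  have := isProbabilityMeasure_shiftedExp hl c
  rw [map_orderStat_pi_eq_withDensity hK hKN (by simp [cdf_shiftedExp hl])
    fun t => hasDerivAt_cdf_shiftedExp hl]
  refine congrArg volume.withDensity (funext fun t => ?_)
  split_ifs with ht
  · rw [cdf_shiftedExp hl, if_pos ht.le]
  · rfl

theorem add_one_mul_eval_bernsteinPolynomial_one_sub {R : Type*} [CommRing R] (n k : ℕ) (q : R) :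
    ((n + 1 : ℕ) : R) * (bernsteinPolynomial R n k).eval (1 - q)
      = ∑ j ∈ Finset.range (k + 1),
          (k + 1 : ℕ) * (n + 1).choose (k + 1) * k.choose j * (-1) ^ j * q ^ (n - k + j) := by
  have absorption : ((n + 1 : ℕ) : R) * n.choose k = (k + 1 : ℕ) * (n + 1).choose (k + 1) := by
    rw [← Nat.cast_mul, Nat.add_one_mul_choose_eq, mul_comm, Nat.cast_mul]
  have expansion : (1 - q) ^ k = ∑ j ∈ Finset.range (k + 1), k.choose j * (-1) ^ j * q ^ j := by
    rw [sub_eq_neg_add, add_pow]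
    exact Finset.sum_congr rfl fun j _ => by rw [neg_pow]; ring
  calc ((n + 1 : ℕ) : R) * (bernsteinPolynomial R n k).eval (1 - q)
      = (n + 1 : ℕ) * n.choose k * q ^ (n - k) * (1 - q) ^ k := by
        simp only [bernsteinPolynomial, Polynomial.eval_mul, Polynomial.eval_pow,
          Polynomial.eval_sub, Polynomial.eval_natCast, Polynomial.eval_X, Polynomial.eval_one,
          sub_sub_cancel]
        ring
    _ = _ := by
        rw [absorption, expansion, Finset.mul_sum]
        exact Finset.sum_congr rfl fun j _ => by ring

/-- The coefficient `B_{K,j}` of the binomial expansion of the density of the `K`-th order statistic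
of `N` exponential variables. -/
def orderStatCoeff (N K j : ℕ) : ℝ :=
  K * N.choose K * (K - 1).choose j * (-1) ^ j

/-- The rate `H_{K,j}` of the `j`-th exponential in the density of the `K`-th order statistic of `N`
exponential variables of rate `ls` on the event that it precedes a deadline of rate `ld`. -/
def deadlineRate (N K : ℕ) (ls ld : ℝ) (j : ℕ) : ℝ :=
  ls * ((N : ℝ) - K + 1 + j) + ld

/-- The density, at `t > c`, of the `K`-th order statistic of `N` exponential variables of rate `ls`
and shift `c`, restricted to the event that it precedes an independent deadline of rate `ld` and
shift `c`. Its total mass is the probability of that event, not `1`. -/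
noncomputable def deadlineDensity (N K : ℕ) (ls ld c t : ℝ) : ℝ :=
  ∑ j ∈ Finset.range K, orderStatCoeff N K j * ls * exp (-deadlineRate N K ls ld j * (t - c))

theorem deadlineRate_pos {N K : ℕ} (hKN : K ≤ N) {ls ld : ℝ} (hls : 0 < ls) (hld : 0 < ld)
    (j : ℕ) : 0 < deadlineRate N K ls ld j := by
  have : (0 : ℝ) ≤ N - K := sub_nonneg.2 (Nat.cast_le.2 hKN)
  rw [deadlineRate]
  positivity

theorem deadlineDensity_eq {N K : ℕ} (hK : 1 ≤ K) (hKN : K ≤ N) (ls ld c t : ℝ) :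
    deadlineDensity N K ls ld c t
      = N * (bernsteinPolynomial ℝ (N - 1) (K - 1)).eval (1 - exp (-ls * (t - c)))
          * (ls * exp (-ls * (t - c))) * exp (-ld * (t - c)) := by
  obtain ⟨k, rfl⟩ := Nat.exists_eq_add_of_le' hK
  obtain ⟨n, rfl⟩ := Nat.exists_eq_add_of_le' (hK.trans hKN)
  have hkn : k ≤ n := by omega
  simp only [Nat.add_sub_cancel, add_one_mul_eval_bernsteinPolynomial_one_sub, Finset.sum_mul]
  refine Finset.sum_congr rfl fun j _ => ?_
  have hexp : exp (-deadlineRate (n + 1) (k + 1) ls ld j * (t - c))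
      = exp (-ls * (t - c)) ^ (n - k + j) * exp (-ls * (t - c)) * exp (-ld * (t - c)) := by
    rw [← exp_nat_mul, ← exp_add, ← exp_add, deadlineRate]
    push_cast [hkn]
    ring_nf
  rw [hexp, orderStatCoeff, Nat.add_sub_cancel]
  ring

theorem deadlineDensity_nonneg {N K : ℕ} (hK : 1 ≤ K) (hKN : K ≤ N) {ls c t : ℝ} (hls : 0 < ls)
    (ld : ℝ) (ht : c ≤ t) : 0 ≤ deadlineDensity N K ls ld c t := by
  have : 0 ≤ 1 - exp (-ls * (t - c)) := by
    rw [sub_nonneg, exp_le_one_iff]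
    nlinarith
  rw [deadlineDensity_eq hK hKN]
  simp only [bernsteinPolynomial, Polynomial.eval_mul, Polynomial.eval_pow, Polynomial.eval_sub,
    Polynomial.eval_natCast, Polynomial.eval_X, Polynomial.eval_one, sub_sub_cancel]
  positivity

theorem measurable_deadlineDensity (N K : ℕ) (ls ld c : ℝ) :
    Measurable (deadlineDensity N K ls ld c) := by
  unfold deadlineDensity
  fun_prop

theorem hasLaw_restrict_preimage {Ω α : Type*} [MeasurableSpace Ω] [MeasurableSpace α]
    {P : Measure Ω} {μ : Measure α} {X : Ω → α} (hX : HasLaw X μ P) {s : Set α}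
    (hs : MeasurableSet s) : HasLaw X (μ.restrict s) (P.restrict (X ⁻¹' s)) where
  aemeasurable := hX.aemeasurable.restrict
  map_eq := by rw [← Measure.restrict_map_of_aemeasurable hX.aemeasurable hs, hX.map_eq]

theorem hasLaw_snd_restrict_prod {α β : Type*} [MeasurableSpace α] [MeasurableSpace β]
    (μ : Measure α) (ν : Measure β) [SFinite μ] [SFinite ν] {s : Set (α × β)}
    (hs : MeasurableSet s) :
    HasLaw Prod.snd (ν.withDensity fun y => μ ((·, y) ⁻¹' s)) ((μ.prod ν).restrict s) where
  map_eq := by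
    ext t ht
    rw [Measure.map_apply measurable_snd ht, Measure.restrict_apply (measurable_snd ht),
      Measure.prod_apply_symm ((measurable_snd ht).inter hs), withDensity_apply _ ht,
      ← lintegral_indicator ht]
    refine lintegral_congr fun y => ?_
    by_cases hy : y ∈ t <;> simp [hy, preimage_preimage, preimage_inter]

theorem hasLaw_restrict_le {Ω α : Type*} [MeasurableSpace Ω] [TopologicalSpace α] [PartialOrder α]
    [OrderClosedTopology α] [SecondCountableTopology α] [MeasurableSpace α]
    [OpensMeasurableSpace α] {P : Measure Ω} {μ ν : Measure α} [SFinite μ] [SFinite ν]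
    {X Y : Ω → α} (hXY : HasLaw (fun ω => (X ω, Y ω)) (μ.prod ν) P) :
    HasLaw Y (ν.withDensity fun y => μ (Ici y)) (P.restrict {ω | Y ω ≤ X ω}) := by
  have hs : MeasurableSet {p : α × α | p.2 ≤ p.1} := measurableSet_le measurable_snd measurable_fst
  exact (hasLaw_snd_restrict_prod μ ν hs).comp (hasLaw_restrict_preimage hXY hs)

theorem map_cond_eq_withDensity {Ω α : Type*} [MeasurableSpace Ω] [MeasurableSpace α]
    {P : Measure Ω} [IsFiniteMeasure P] {ρ : Measure α} {E : Set Ω} {Y : Ω → α} {s : α → ℝ}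
    (h : (P.restrict E).map Y = ρ.withDensity fun a => ENNReal.ofReal (s a)) :
    (P[|E]).map Y = ρ.withDensity fun a => ENNReal.ofReal (s a / P.real E) := by
  rcases eq_or_ne (P E) 0 with hE | hE
  · simp [cond_eq_zero_of_meas_eq_zero hE, measureReal_def, hE]
  · have hpos : 0 < P.real E := ENNReal.toReal_pos hE (measure_ne_top P E)
    rw [ProbabilityTheory.cond, Measure.map_smul, h,
      ← withDensity_smul' _ _ (ENNReal.inv_ne_top.2 hE)]
    refine congrArg ρ.withDensity (funext fun a => ?_)
    rw [ENNReal.ofReal_div_of_pos hpos, ofReal_measureReal, Pi.smul_apply, smul_eq_mul,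
      ENNReal.div_eq_inv_mul]

theorem hasLaw_prodMk_orderStat {Ω α : Type*} [MeasurableSpace Ω] [MeasurableSpace α]
    {P : Measure Ω} {N K : ℕ} (hK : 1 ≤ K) (hKN : K ≤ N) {T : Fin N → Ω → ℝ} {D : Ω → α}
    {μ : Measure α} {ν : Measure (Fin N → ℝ)} [SFinite μ] [SFinite ν]
    (hlaw : HasLaw (fun ω => (D ω, fun i => T i ω)) (μ.prod ν) P) :
    HasLaw (fun ω => (D ω, orderStat T K ω)) (μ.prod (ν.map (orderStat Function.eval K))) P := by
  have hmeas := measurable_orderStat hK hKN (T := Function.eval) measurable_pi_apply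
  have : HasLaw (Prod.map id (orderStat Function.eval K))
      (μ.prod (ν.map (orderStat Function.eval K))) (μ.prod ν) :=
    ⟨(measurable_id.prodMap hmeas).aemeasurable,
      by rw [← Measure.map_prod_map μ ν measurable_id hmeas, Measure.map_id]⟩
  exact this.comp hlaw

theorem hasLaw_orderStat_restrict_le {Ω : Type*} [MeasurableSpace Ω] {P : Measure Ω} {N K : ℕ}
    (hK : 1 ≤ K) (hKN : K ≤ N) {ls ld c : ℝ} (hls : 0 < ls) (hld : 0 < ld) {T : Fin N → Ω → ℝ}
    {D : Ω → ℝ} (hlaw : HasLaw (fun ω => (D ω, fun i => T i ω))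
      ((shiftedExp ld c).prod (Measure.pi fun _ : Fin N => shiftedExp ls c)) P) :
    HasLaw (orderStat T K)
      (volume.withDensity fun t =>
        ENNReal.ofReal (if c < t then deadlineDensity N K ls ld c t else 0))
      (P.restrict {ω | orderStat T K ω ≤ D ω}) := by
  have := isProbabilityMeasure_shiftedExp hls c
  have := isProbabilityMeasure_shiftedExp hld c
  have hsurvival : Measurable fun t => shiftedExp ld c (Ici t) :=
    Antitone.measurable fun _ _ h => measure_mono (Ici_subset_Ici.2 h)
  have hdensity (t : ℝ) :
      ENNReal.ofReal (if c < t then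
          N * (bernsteinPolynomial ℝ (N - 1) (K - 1)).eval (1 - exp (-ls * (t - c)))
            * (ls * exp (-ls * (t - c))) else 0) * shiftedExp ld c (Ici t)
        = ENNReal.ofReal (if c < t then deadlineDensity N K ls ld c t else 0) := by
    split_ifs with ht
    · rw [shiftedExp_Ici hld ht.le, ← ENNReal.ofReal_mul' (exp_pos _).le, deadlineDensity_eq hK hKN]
    · simp
  have h := hasLaw_restrict_le (hasLaw_prodMk_orderStat hK hKN hlaw)
  rw [map_orderStat_pi_shiftedExp hK hKN hls, ← withDensity_mul _ _ hsurvival] at h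
  · simpa only [Pi.mul_def, hdensity] using h
  · exact .ennreal_ofReal (.ite measurableSet_Ioi (by fun_prop) measurable_const)

theorem integrableOn_Ioi_zero_mul_exp {h : ℝ} (hh : 0 < h) :
    IntegrableOn (fun t => t * exp (-h * t)) (Ioi 0) := by
  simpa using integrableOn_rpow_mul_exp_neg_mul_rpow (s := 1) (by norm_num) one_pos hh

theorem integral_Ioi_zero_mul_exp {h : ℝ} (hh : 0 < h) :
    ∫ t in Ioi 0, t * exp (-h * t) = 1 / h ^ 2 := by
  simpa [show (2 : ℝ) - 1 = 1 by norm_num] using integral_rpow_mul_exp_neg_mul_Ioi two_pos hh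

theorem integrableOn_Ioi_mul_exp_sub {h : ℝ} (hh : 0 < h) (c : ℝ) :
    IntegrableOn (fun t => t * exp (-h * (t - c))) (Ioi c) := by
  have hshift : (· + c) ⁻¹' Ioi c = Ioi 0 := by ext; simp
  rw [← (measurePreserving_add_right volume c).integrableOn_comp_preimage
    (measurableEmbedding_addRight c), hshift]
  simpa [Function.comp_def, add_mul, Pi.add_def] using (integrableOn_Ioi_zero_mul_exp hh).add
    ((integrableOn_exp_mul_Ioi (neg_neg_of_pos hh) 0).const_mul c)

theorem integral_Ioi_mul_exp_sub {h : ℝ} (hh : 0 < h) (c : ℝ) :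
    ∫ t in Ioi c, t * exp (-h * (t - c)) = (c * h + 1) / h ^ 2 := by
  have hshift : (· + c) ⁻¹' Ioi c = Ioi 0 := by ext; simp
  have hexp := integrableOn_exp_mul_Ioi (neg_neg_of_pos hh) 0
  calc ∫ t in Ioi c, t * exp (-h * (t - c))
      = ∫ t in Ioi 0, (t * exp (-h * t) + c * exp (-h * t)) := by
        rw [← (measurePreserving_add_right volume c).setIntegral_preimage_emb
          (measurableEmbedding_addRight c), hshift]
        simp only [add_sub_cancel_right, add_mul]
    _ = 1 / h ^ 2 + c * (1 / h) := by
        rw [integral_add (integrableOn_Ioi_zero_mul_exp hh) (hexp.const_mul c), integral_const_mul,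
          integral_Ioi_zero_mul_exp hh, integral_exp_mul_Ioi (neg_neg_of_pos hh)]
        simp
    _ = (c * h + 1) / h ^ 2 := by
        field_simp
        ring

theorem integral_withDensity_ite_lt {E : Type*} [NormedAddCommGroup E] [NormedSpace ℝ E] {c : ℝ}
    {s : ℝ → ℝ} (hs : Measurable s) (hs0 : ∀ t, c < t → 0 ≤ s t) (f : ℝ → E) :
    ∫ t, f t ∂(volume.withDensity fun t => ENNReal.ofReal (if c < t then s t else 0))
      = ∫ t in Ioi c, s t • f t := by
  rw [integral_withDensity_eq_integral_toReal_smul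
      (.ennreal_ofReal (.ite measurableSet_Ioi hs measurable_const))
      (.of_forall fun _ => ENNReal.ofReal_lt_top), ← integral_indicator measurableSet_Ioi]
  refine integral_congr_ae (.of_forall fun t => ?_)
  by_cases ht : c < t <;> simp [ht, hs0]

theorem integral_id_withDensity_deadlineDensity {N K : ℕ} (hK : 1 ≤ K) (hKN : K ≤ N) {ls ld : ℝ}
    (hls : 0 < ls) (hld : 0 < ld) (c : ℝ) :
    ∫ t, t ∂(volume.withDensity fun t =>
        ENNReal.ofReal (if c < t then deadlineDensity N K ls ld c t else 0))
      = ∑ j ∈ Finset.range K, orderStatCoeff N K j * ls * (c * deadlineRate N K ls ld j + 1)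
          / deadlineRate N K ls ld j ^ 2 := by
  have hrate := deadlineRate_pos hKN hls hld
  calc _ = ∫ t in Ioi c, deadlineDensity N K ls ld c t • t :=
        integral_withDensity_ite_lt (measurable_deadlineDensity N K ls ld c)
          (fun t ht => deadlineDensity_nonneg hK hKN hls ld ht.le) _
    _ = ∫ t in Ioi c, ∑ j ∈ Finset.range K, orderStatCoeff N K j * ls
          * (t * exp (-deadlineRate N K ls ld j * (t - c))) := by
        simp only [deadlineDensity, smul_eq_mul, Finset.sum_mul, mul_assoc, mul_comm (exp _)]
    _ = _ := by
        rw [integral_finsetSum _ fun j _ =>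
          (integrableOn_Ioi_mul_exp_sub (hrate j) c).const_mul _]
        simp only [integral_const_mul, integral_Ioi_mul_exp_sub (hrate _), mul_div_assoc]

end

theorem cond_density_and_first_moment_orderStat_random_deadline_general
    {Ω : Type*} [MeasurableSpace Ω] (P : Measure Ω) (N K : ℕ) (hK : 1 ≤ K) (hKN : K ≤ N)
    (ls ld c : ℝ) (hls : 0 < ls) (hld : 0 < ld) (T : Fin N → Ω → ℝ) (D : Ω → ℝ)
    (hlaw : P.map (fun ω => (D ω, fun i => T i ω))
      = (shiftedExp ld c).prod (Measure.pi fun _ : Fin N => shiftedExp ls c))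
    (B : ℕ → ℝ) (hB : ∀ j, B j = (K : ℝ) * (N.choose K : ℝ) * ((K - 1).choose j : ℝ) * (-1) ^ j)
    (H : ℕ → ℝ) (hH : ∀ j, H j = ls * ((N : ℝ) - K + 1 + j) + ld)
    (R : ℝ) (hR : R = (P {ω | orderStat T K ω ≤ D ω}).toReal) :
    Measure.map (orderStat T K) (P[|{ω | orderStat T K ω ≤ D ω}])
      = volume.withDensity (fun t => ENNReal.ofReal
          (if c < t then (∑ j ∈ Finset.range K, B j * ls * exp (-(H j) * (t - c))) / R else 0)) ∧
    (∫ ω, orderStat T K ω ∂(P[|{ω | orderStat T K ω ≤ D ω}]))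
      = (1 / R) * ∑ j ∈ Finset.range K, B j * ls * (c * H j + 1) / (H j) ^ 2 := by
  obtain rfl : B = orderStatCoeff N K := funext hB
  obtain rfl : H = deadlineRate N K ls ld := funext hH
  have := isProbabilityMeasure_shiftedExp hls c
  have := isProbabilityMeasure_shiftedExp hld c
  have hjoint : HasLaw (fun ω => (D ω, fun i => T i ω)) _ P :=
    ⟨.of_map_ne_zero (hlaw ▸ IsProbabilityMeasure.ne_zero _), hlaw⟩
  have := hjoint.isProbabilityMeasure
  have hrestrict := hasLaw_orderStat_restrict_le hK hKN hls hld hjoint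
  subst hR
  constructor
  · simpa only [ite_div, zero_div, deadlineDensity, measureReal_def] using
      map_cond_eq_withDensity hrestrict.map_eq
  · rw [ProbabilityTheory.cond, integral_smul_measure, hrestrict.integral_eq,
      integral_id_withDensity_deadlineDensity hK hKN hls hld, ENNReal.toReal_inv, smul_eq_mul,
      one_div]

theorem cond_density_and_first_moment_orderStat_random_deadline
    {Ω : Type*} [MeasurableSpace Ω] (P : MeasureTheory.Measure Ω) [IsProbabilityMeasure P]
    (N K : ℕ) (hK : 1 ≤ K) (hKN : K ≤ N)
    (ls ld c : ℝ) (hls : 0 < ls) (hld : 0 < ld) (hc : 0 ≤ c)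
    (T : Fin N → Ω → ℝ) (hT : ∀ i, Measurable (T i))
    (D : Ω → ℝ) (hD : Measurable D)
    (hlaw : MeasureTheory.Measure.map (fun ω => (D ω, fun i => T i ω)) P
      = (shiftedExp ld c).prod (MeasureTheory.Measure.pi (fun _ : Fin N => shiftedExp ls c)))
    (B : ℕ → ℝ) (hB : ∀ j, B j = (K : ℝ) * (N.choose K : ℝ) * ((K - 1).choose j : ℝ) * (-1) ^ j)
    (H : ℕ → ℝ) (hH : ∀ j, H j = ls * ((N : ℝ) - K + 1 + j) + ld)
    (R : ℝ) (hR : R = (P {ω | orderStat T K ω ≤ D ω}).toReal) :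
    MeasureTheory.Measure.map (orderStat T K) (P[|{ω | orderStat T K ω ≤ D ω}])
      = MeasureTheory.volume.withDensity (fun t => ENNReal.ofReal
          (if c < t then (∑ j ∈ Finset.range K, B j * ls * Real.exp (-(H j) * (t - c))) / R
           else 0)) ∧
    (∫ ω, orderStat T K ω ∂(P[|{ω | orderStat T K ω ≤ D ω}]))
      = (1 / R) * ∑ j ∈ Finset.range K, B j * ls * (c * H j + 1) / (H j) ^ 2 := by
  exact cond_density_and_first_moment_orderStat_random_deadline_general P N K hK hKN ls ld c hls hld
    T D hlaw B hB H hH R hR
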